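/- Consider a GI/G/1-type Markov chain whose phase matrix A is irreducible and not stochastic (Ae ≤ e, Ae ≠ e). Define column vectors X_i^{(0)} = 0 ∈ ℝ^m for all i ≥ 0, and recursively X_0^{(n)} = 0 and X_i^{(n)} = Σ_{k≥0, k≠i} P_{i,k} X_k^{(n−1)} + e for i ≥ 1, where P_{i,k} denotes the m×m block of P from level i to level k. Then for every n ≥ 0 and every i ≥ 1, X_i^{(n)} ≤ (I − A)^{−1} e entrywise; consequently the minimal nonnegative solution {X_i}_{i≥1} of the system Y_i = Σ_{k≠i} P_{i,k} Y_k + e (i ≥ 1), Y_0 = 0, obtained as X_i = lim_{n→∞} X_i^{(n)}, satisfies X_i ≤ (I − A)^{−1} e for all i ≥ 1. -/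

import Mathlib

open Filter Topology
open scoped ENNReal NNReal BigOperators

namespace GIG1

/-- The state space of a `GI/G/1`-type Markov chain: level `i : ℕ`, phase `j : Fin m`. -/
abbrev S (m : ℕ) := ℕ × Fin m

/-- The transition kernel of the `GI/G/1`-type Markov chain with matrix blocks `A, B`. -/
noncomputable def P {m : ℕ} (A B : ℤ → Matrix (Fin m) (Fin m) ℝ) : S m → S m → ℝ
  | (0, j), (k, s) => B (k : ℤ) j s
  | (i + 1, j), (0, s) => B (-(i + 1 : ℤ)) j s
  | (i + 1, j), (k + 1, s) => A ((k : ℤ) - (i : ℤ)) j s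

/-- `n`-step transition probabilities. -/
noncomputable def Pn {m : ℕ} (P : S m → S m → ℝ) : ℕ → S m → S m → ℝ
  | 0, x, y => if x = y then 1 else 0
  | n + 1, x, y => ∑' z : S m, P x z * Pn P n z y

def Stochastic {m : ℕ} (P : S m → S m → ℝ) : Prop :=
  (∀ x y, 0 ≤ P x y) ∧ ∀ x, HasSum (P x) 1

def ChainIrreducible {m : ℕ} (P : S m → S m → ℝ) : Prop :=
  ∀ x y, ∃ n, 1 ≤ n ∧ 0 < Pn P n x y

def ChainAperiodic {m : ℕ} (P : S m → S m → ℝ) : Prop :=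
  ∀ x, ∃ N, ∀ n ≥ N, 0 < Pn P n x x

/-- `pd` is a stationary probability distribution of `P`; for an irreducible aperiodic chain
this is equivalent to positive recurrence. -/
def IsStationary {m : ℕ} (P : S m → S m → ℝ) (pd : S m → ℝ) : Prop :=
  (∀ x, 0 ≤ pd x) ∧ HasSum pd 1 ∧ ∀ y, HasSum (fun x => pd x * P x y) (pd y)

/-- The phase matrix `A = ∑ₖ Aₖ`. -/
noncomputable def matA {m : ℕ} (A : ℤ → Matrix (Fin m) (Fin m) ℝ) : Matrix (Fin m) (Fin m) ℝ :=
  Matrix.of fun r s => ∑' k : ℤ, A k r s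

/-- The phase matrix `A = ∑ₖ Aₖ` is stochastic. -/
def PhaseStochastic {m : ℕ} (A : ℤ → Matrix (Fin m) (Fin m) ℝ) : Prop :=
  ∀ r, HasSum (fun p : ℤ × Fin m => A p.1 r p.2) 1

/-- Irreducibility of a nonnegative matrix. -/
def MatIrreducible {m : ℕ} (M : Matrix (Fin m) (Fin m) ℝ) : Prop :=
  ∀ r s, ∃ n, 1 ≤ n ∧ 0 < (M ^ n) r s

/-- Radius of convergence of a power series with nonnegative coefficients. -/
noncomputable def radius (c : ℕ → ℝ) : ℝ≥0∞ :=
  ⨆ (r : ℝ≥0) (_ : Summable fun k => c k * (r : ℝ) ^ k), (r : ℝ≥0∞)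

/-- `φ_{A+}`: the minimum over entries of the radii of convergence of `∑_{k ≥ 1} A_k(r,s) z^k`. -/
noncomputable def phiA {m : ℕ} (A : ℤ → Matrix (Fin m) (Fin m) ℝ) : ℝ≥0∞ :=
  ⨅ (r : Fin m) (s : Fin m), radius fun k => A ((k : ℤ) + 1) r s

/-- `φ_{B+}`. -/
noncomputable def phiB {m : ℕ} (B : ℤ → Matrix (Fin m) (Fin m) ℝ) : ℝ≥0∞ :=
  ⨅ (r : Fin m) (s : Fin m), radius fun k => B ((k : ℤ) + 1) r s

/-- The matrix sequence `{C_k}_{k ≥ 1}` is light-tailed. -/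
def LightMat {m : ℕ} (C : ℤ → Matrix (Fin m) (Fin m) ℝ) : Prop :=
  ∀ r s, ∃ ε > (0 : ℝ),
    Summable fun k : ℕ => C ((k : ℤ) + 1) r s * Real.exp (ε * ((k : ℝ) + 1))

/-- `A^*(z) = ∑_{k ∈ ℤ} z^k A_k` for complex `z`. -/
noncomputable def AstarC {m : ℕ} (A : ℤ → Matrix (Fin m) (Fin m) ℝ) (z : ℂ) :
    Matrix (Fin m) (Fin m) ℂ :=
  Matrix.of fun r s => ∑' k : ℤ, (A k r s : ℂ) * z ^ k

/-- `A^*(z) = ∑_{k ∈ ℤ} z^k A_k` for real `z`. -/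
noncomputable def AstarR {m : ℕ} (A : ℤ → Matrix (Fin m) (Fin m) ℝ) (z : ℝ) :
    Matrix (Fin m) (Fin m) ℝ :=
  Matrix.of fun r s => ∑' k : ℤ, A k r s * z ^ k

/-- The set `Ω = {z ∈ ℂ : 1 < |z| < φ_{A+}, det(I - A^*(z)) = 0}`. -/
def Omega {m : ℕ} (A : ℤ → Matrix (Fin m) (Fin m) ℝ) : Set ℂ :=
  {z | 1 < ‖z‖ ∧ ENNReal.ofReal ‖z‖ < phiA A ∧ (1 - AstarC A z).det = 0}

/-- `η`: the minimal modulus of an element of `Ω`, or `∞` when `Ω = ∅`. -/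
noncomputable def eta {m : ℕ} (A : ℤ → Matrix (Fin m) (Fin m) ℝ) : ℝ≥0∞ :=
  sInf ((fun z : ℂ => ENNReal.ofReal ‖z‖) '' Omega A)

/-- The largest (Perron–Frobenius) eigenvalue of a nonnegative matrix. -/
noncomputable def chi {m : ℕ} (M : Matrix (Fin m) (Fin m) ℝ) : ℝ :=
  sSup {r : ℝ | ∃ v : Fin m → ℝ, v ≠ 0 ∧ M.mulVec v = r • v}

/-- The iteration scheme for the minimal nonnegative solution of
`Y_i = ∑_{k ≠ i} P_{i,k} Y_k + e` (`i ≥ 1`), `Y_0 = 0`. -/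
noncomputable def Xseq {m : ℕ} (P : S m → S m → ℝ) : ℕ → ℕ → Fin m → ℝ
  | 0, _ => 0
  | n + 1, i =>
      if i = 0 then 0
      else fun j =>
        (∑' k : ℕ, if k = i then 0 else ∑ s : Fin m, P (i, j) (k, s) * Xseq P n k s) + 1

/-! The vector `v = (I - A)⁻¹ e` is nonnegative and satisfies `v = A v + e`. Since the block row of
`P` at a level `i ≥ 1`, restricted to levels `≥ 1`, is a window of the sequence `(A_k)`, the family
`Y_0 = 0`, `Y_i = v` is a nonnegative supersolution of the system; the iteration is monotone and
starts at `0`, so it stays below `Y`. The blocks `B_k` only ever multiply `X_0 = 0`.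

Nonnegativity of `v` and invertibility of `I - A` both come from a minimum principle: `A w ≤ w`
forces `w ≥ 0` (look at the minimum of `w`) as soon as each row has a sum below `1` in some power of
`A`, a deficiency that irreducibility propagates from a single row of `A` to all others. -/

section NonnegMatrix

open scoped Matrix

variable {ι R : Type*} [Fintype ι]

theorem mulVec_le_mulVec_of_nonneg [Semiring R] [PartialOrder R] [IsOrderedRing R]
    {κ : Type*} {M : Matrix κ ι R} (hM : ∀ r s, 0 ≤ M r s) {v w : ι → R} (hvw : v ≤ w) :
    M *ᵥ v ≤ M *ᵥ w :=
  fun r => dotProduct_le_dotProduct_of_nonneg_left hvw (hM r)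

variable [DecidableEq ι]

theorem pow_mulVec_le_self [Semiring R] [PartialOrder R] [IsOrderedRing R]
    {M : Matrix ι ι R} (hM : ∀ r s, 0 ≤ M r s) {w : ι → R} (hw : M *ᵥ w ≤ w) (k : ℕ) :
    M ^ k *ᵥ w ≤ w := by
  induction k with
  | zero => simp
  | succ k ih =>
    calc M ^ (k + 1) *ᵥ w = M ^ k *ᵥ (M *ᵥ w) := by rw [pow_succ, Matrix.mulVec_mulVec]
      _ ≤ M ^ k *ᵥ w := mulVec_le_mulVec_of_nonneg (Matrix.pow_apply_nonneg hM k) hw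
      _ ≤ w := ih

theorem pow_succ_mulVec_one_lt_one [Semiring R] [PartialOrder R] [IsStrictOrderedRing R]
    {M : Matrix ι ι R} (hM : ∀ r s, 0 ≤ M r s) (hle : M *ᵥ 1 ≤ 1) {r s : ι}
    (hs : (M *ᵥ 1) s < 1) {k : ℕ} (hk : 0 < (M ^ k) r s) : (M ^ (k + 1) *ᵥ 1) r < 1 :=
  calc (M ^ (k + 1) *ᵥ 1) r = ∑ t, (M ^ k) r t * (M *ᵥ 1) t := by
        rw [pow_succ, ← Matrix.mulVec_mulVec, Matrix.mulVec, dotProduct]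
    _ < ∑ t, (M ^ k) r t * (1 : ι → R) t :=
        Finset.sum_lt_sum
          (fun t _ => mul_le_mul_of_nonneg_left (hle t) (Matrix.pow_apply_nonneg hM k r t))
          ⟨s, Finset.mem_univ s, mul_lt_mul_of_pos_left hs hk⟩
    _ ≤ 1 := pow_mulVec_le_self hM hle k r

theorem mulVec_inv_one_sub_mulVec_add [CommRing R] {M : Matrix ι ι R} (hM : IsUnit (1 - M))
    (b : ι → R) :
    M *ᵥ ((1 - M)⁻¹ *ᵥ b) + b = (1 - M)⁻¹ *ᵥ b := by
  have hinv : (1 - M) *ᵥ ((1 - M)⁻¹ *ᵥ b) = b := by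
    rw [Matrix.mulVec_mulVec, Matrix.mul_nonsing_inv _ ((Matrix.isUnit_iff_isUnit_det _).1 hM),
      Matrix.one_mulVec]
  rw [Matrix.sub_mulVec, Matrix.one_mulVec] at hinv
  exact (sub_eq_iff_eq_add'.1 hinv).symm

variable [Field R] [LinearOrder R] [IsStrictOrderedRing R] {M : Matrix ι ι R}

theorem nonneg_of_mulVec_le_self (hM : ∀ r s, 0 ≤ M r s)
    (hlt : ∀ r, ∃ k, (M ^ k *ᵥ 1) r < 1) {w : ι → R} (hw : M *ᵥ w ≤ w) : 0 ≤ w := by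
  intro t
  have : Nonempty ι := ⟨t⟩
  obtain ⟨r, hmin⟩ := Finite.exists_min w
  obtain ⟨k, hk⟩ := hlt r
  by_contra! hwt
  have hwr : w r < 0 := (hmin t).trans_lt hwt
  have hself : w r < w r :=
    calc w r < w r * (M ^ k *ᵥ 1) r := by simpa using mul_lt_mul_of_neg_left hk hwr
      _ = (M ^ k *ᵥ (w r • 1)) r := by rw [Matrix.mulVec_smul, Pi.smul_apply, smul_eq_mul]
      _ ≤ (M ^ k *ᵥ w) r :=
          mulVec_le_mulVec_of_nonneg (Matrix.pow_apply_nonneg hM k)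
            (fun s => by simpa using hmin s) r
      _ ≤ w r := pow_mulVec_le_self hM hw k r
  exact hself.false

theorem isUnit_one_sub_of_pow_mulVec_one_lt_one (hM : ∀ r s, 0 ≤ M r s)
    (hlt : ∀ r, ∃ k, (M ^ k *ᵥ 1) r < 1) : IsUnit (1 - M) := by
  rw [← Matrix.mulVec_injective_iff_isUnit]
  refine (injective_iff_map_eq_zero (1 - M).mulVecLin).2 fun x hx => ?_
  have hfix : M *ᵥ x = x := by
    rw [Matrix.mulVecLin_apply, Matrix.sub_mulVec, Matrix.one_mulVec, sub_eq_zero] at hx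
    exact hx.symm
  have hneg : 0 ≤ -x := nonneg_of_mulVec_le_self hM hlt (by rw [Matrix.mulVec_neg, hfix])
  exact le_antisymm (neg_nonneg.1 hneg) (nonneg_of_mulVec_le_self hM hlt hfix.le)

theorem inv_one_sub_mulVec_nonneg (hM : ∀ r s, 0 ≤ M r s)
    (hlt : ∀ r, ∃ k, (M ^ k *ᵥ 1) r < 1) {b : ι → R} (hb : 0 ≤ b) : 0 ≤ (1 - M)⁻¹ *ᵥ b := by
  have hfix := mulVec_inv_one_sub_mulVec_add (isUnit_one_sub_of_pow_mulVec_one_lt_one hM hlt) b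
  exact nonneg_of_mulVec_le_self hM hlt ((le_add_of_nonneg_right hb).trans hfix.le)

end NonnegMatrix

theorem MatIrreducible.exists_pow_mulVec_one_lt_one {m : ℕ} {M : Matrix (Fin m) (Fin m) ℝ}
    (hirr : MatIrreducible M) (hM : ∀ r s, 0 ≤ M r s) (hle : M.mulVec 1 ≤ 1)
    (hne : M.mulVec 1 ≠ 1) (r : Fin m) : ∃ k, (M ^ k).mulVec 1 r < 1 := by
  obtain ⟨s, hs⟩ := (Pi.lt_def.1 (lt_of_le_of_ne hle hne)).2
  obtain ⟨k, -, hk⟩ := hirr r s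
  exact ⟨k + 1, pow_succ_mulVec_one_lt_one hM hle hs hk⟩

section Supersolution

variable {m : ℕ} {Q : S m → S m → ℝ} {X Y : ℕ → Fin m → ℝ}

/-- The entry at phase `j` of the `k`-th term `P_{i,k} Y_k` of the sum over `k ≠ i` in the system
`Y_i = ∑_{k ≠ i} P_{i,k} Y_k + e`; the excluded term `k = i` is encoded as `0`. -/
noncomputable def offLevelTerm (Q : S m → S m → ℝ) (Y : ℕ → Fin m → ℝ) (i : ℕ) (j : Fin m)
    (k : ℕ) : ℝ :=
  if k = i then 0 else ∑ s, Q (i, j) (k, s) * Y k s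

/-- A nonnegative supersolution of the system `Y_i = ∑_{k ≠ i} P_{i,k} Y_k + e` (`i ≥ 1`),
`Y_0 = 0`. The levels `i ≥ 1` are written `i + 1`, and convergence of the series is required
because a divergent `tsum` is `0`. -/
structure IsSupersolution (Q : S m → S m → ℝ) (Y : ℕ → Fin m → ℝ) : Prop where
  level_zero : Y 0 = 0
  nonneg : 0 ≤ Y
  summable : ∀ i j, Summable (offLevelTerm Q Y (i + 1) j)
  tsum_add_one_le : ∀ i j, ∑' k, offLevelTerm Q Y (i + 1) j k + 1 ≤ Y (i + 1) j

theorem Xseq_level_zero (n : ℕ) : Xseq Q n 0 = 0 := by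
  cases n <;> rfl

theorem Xseq_succ_succ (n i : ℕ) (j : Fin m) :
    Xseq Q (n + 1) (i + 1) j = ∑' k, offLevelTerm Q (Xseq Q n) (i + 1) j k + 1 :=
  rfl

theorem offLevelTerm_mono (hQ : ∀ i j k s, 0 ≤ Q (i + 1, j) (k + 1, s)) (hX : X 0 = 0)
    (hY : Y 0 = 0) (hXY : X ≤ Y) (i : ℕ) (j : Fin m) :
    offLevelTerm Q X (i + 1) j ≤ offLevelTerm Q Y (i + 1) j := by
  intro k
  unfold offLevelTerm
  split_ifs
  · exact le_rfl
  · cases k with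
    | zero => rw [hX, hY]
    | succ k =>
      exact Finset.sum_le_sum fun s _ => mul_le_mul_of_nonneg_left (hXY (k + 1) s) (hQ i j k s)

theorem offLevelTerm_nonneg (hQ : ∀ i j k s, 0 ≤ Q (i + 1, j) (k + 1, s)) (hY : Y 0 = 0)
    (hY₀ : 0 ≤ Y) (i : ℕ) (j : Fin m) : 0 ≤ offLevelTerm Q Y (i + 1) j :=
  calc (0 : ℕ → ℝ) = offLevelTerm Q 0 (i + 1) j := by ext k; simp [offLevelTerm]
    _ ≤ offLevelTerm Q Y (i + 1) j := offLevelTerm_mono hQ rfl hY hY₀ i j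

theorem Xseq_nonneg (hQ : ∀ i j k s, 0 ≤ Q (i + 1, j) (k + 1, s)) (n : ℕ) : 0 ≤ Xseq Q n := by
  induction n with
  | zero => exact le_rfl
  | succ n ih =>
    intro i j
    cases i with
    | zero => exact le_rfl
    | succ i =>
      exact add_nonneg (tsum_nonneg (offLevelTerm_nonneg hQ (Xseq_level_zero n) ih i j))
        zero_le_one

theorem IsSupersolution.Xseq_le (hY : IsSupersolution Q Y)
    (hQ : ∀ i j k s, 0 ≤ Q (i + 1, j) (k + 1, s)) (n : ℕ) : Xseq Q n ≤ Y := by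
  induction n with
  | zero => exact hY.nonneg
  | succ n ih =>
    intro i j
    cases i with
    | zero => exact hY.nonneg 0 j
    | succ i =>
      have hterm := offLevelTerm_mono hQ (Xseq_level_zero n) hY.level_zero ih i j
      have hsum : Summable (offLevelTerm Q (Xseq Q n) (i + 1) j) :=
        (hY.summable i j).of_nonneg_of_le
          (offLevelTerm_nonneg hQ (Xseq_level_zero n) (Xseq_nonneg hQ n) i j) hterm
      calc Xseq Q (n + 1) (i + 1) j
          = ∑' k, offLevelTerm Q (Xseq Q n) (i + 1) j k + 1 := Xseq_succ_succ n i j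
        _ ≤ ∑' k, offLevelTerm Q Y (i + 1) j k + 1 :=
            add_le_add (hsum.tsum_le_tsum hterm (hY.summable i j)) le_rfl
        _ ≤ Y (i + 1) j := hY.tsum_add_one_le i j

end Supersolution

section PhaseMatrix

variable {m : ℕ} {A B : ℤ → Matrix (Fin m) (Fin m) ℝ}

theorem matA_nonneg (hA0 : ∀ k r s, 0 ≤ A k r s) (r s : Fin m) : 0 ≤ matA A r s :=
  tsum_nonneg fun k => hA0 k r s

theorem hasSum_mulVec_matA (hA : ∀ r s, Summable fun k => A k r s) (v : Fin m → ℝ) (j : Fin m) :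
    HasSum (fun k => (A k).mulVec v j) ((matA A).mulVec v j) :=
  hasSum_sum (s := Finset.univ) fun s _ => (hA j s).hasSum.mul_right (v s)

-- Row `i` of `P` only shows the blocks `A_k` with `k > -i`, so the tail `k → -∞` has to be
-- bounded uniformly over all rows.
theorem Stochastic.summable_block (hP : Stochastic (P A B)) (hA0 : ∀ k r s, 0 ≤ A k r s)
    (r s : Fin m) : Summable fun k => A k r s := by
  have hinj : Function.Injective fun k : ℕ => ((k + 1, s) : S m) := fun a b hab => by
    simpa using hab
  rw [summable_int_iff_summable_nat_and_neg]
  constructor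
  · simpa [Function.comp_def, P] using (hP.2 (1, r)).summable.comp_injective hinj
  · refine summable_of_sum_range_le (c := 1) (fun k => hA0 _ r s) fun n => ?_
    calc ∑ k ∈ Finset.range n, A (-k) r s
        ≤ ∑ k ∈ Finset.range (n + 1), A (-k) r s :=
          Finset.sum_le_sum_of_subset_of_nonneg (Finset.range_mono n.le_succ)
            fun k _ _ => hA0 _ r s
      _ = ∑ k ∈ Finset.range (n + 1), P A B (n + 1, r) (k + 1, s) := by
          rw [← Finset.sum_flip]
          refine Finset.sum_congr rfl fun k hk => ?_
          rw [Nat.cast_sub (Finset.mem_range_succ_iff.1 hk), neg_sub]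
          rfl
      _ = ∑ x ∈ (Finset.range (n + 1)).map ⟨_, hinj⟩, P A B (n + 1, r) x := by
          rw [Finset.sum_map]
          rfl
      _ ≤ 1 := sum_le_hasSum _ (fun x _ => hP.1 _ x) (hP.2 (n + 1, r))

theorem offLevelTerm_P_le (hA0 : ∀ k r s, 0 ≤ A k r s) {v : Fin m → ℝ} (hv : 0 ≤ v) (i : ℕ)
    (j : Fin m) (k : ℕ) :
    offLevelTerm (P A B) (fun l => if l = 0 then 0 else v) (i + 1) j k ≤
      (A (k - (i + 1 : ℕ))).mulVec v j := by
  have hnonneg : 0 ≤ (A (k - (i + 1 : ℕ))).mulVec v j :=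
    dotProduct_nonneg_of_nonneg (hA0 _ j) hv
  unfold offLevelTerm
  split_ifs
  · exact hnonneg
  · cases k with
    | zero => simpa using hnonneg
    | succ k => simp [P, Matrix.mulVec, dotProduct]

theorem isSupersolution_of_mulVec_matA_add_one_le (hA0 : ∀ k r s, 0 ≤ A k r s)
    (hA : ∀ r s, Summable fun k => A k r s) {v : Fin m → ℝ} (hv : 0 ≤ v)
    (hAv : (matA A).mulVec v + 1 ≤ v) :
    IsSupersolution (P A B) fun i => if i = 0 then 0 else v := by
  set Y : ℕ → Fin m → ℝ := fun i => if i = 0 then 0 else v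
  have hY : 0 ≤ Y := fun i => by
    by_cases hi : i = 0 <;> simp [Y, hi, hv]
  have hinj (i : ℕ) : Function.Injective fun k : ℕ => (k : ℤ) - (i + 1 : ℕ) :=
    fun a b hab => by simpa using hab
  have hwindow (i : ℕ) (j : Fin m) : Summable fun k : ℕ => (A (k - (i + 1 : ℕ))).mulVec v j :=
    (hasSum_mulVec_matA hA v j).summable.comp_injective (hinj i)
  have hsum (i : ℕ) (j : Fin m) : Summable (offLevelTerm (P A B) Y (i + 1) j) :=
    (hwindow i j).of_nonneg_of_le (offLevelTerm_nonneg (fun _ _ _ _ => hA0 _ _ _) rfl hY i j)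
      (offLevelTerm_P_le hA0 hv i j)
  refine ⟨rfl, hY, hsum, fun i j => ?_⟩
  calc ∑' k, offLevelTerm (P A B) Y (i + 1) j k + 1
      ≤ ∑' k : ℕ, (A (k - (i + 1 : ℕ))).mulVec v j + 1 :=
        add_le_add ((hsum i j).tsum_le_tsum (offLevelTerm_P_le hA0 hv i j) (hwindow i j)) le_rfl
    _ ≤ ∑' k : ℤ, (A k).mulVec v j + 1 :=
        add_le_add (tsum_comp_le_tsum_of_inj (hasSum_mulVec_matA hA v j).summable
          (fun k => dotProduct_nonneg_of_nonneg (hA0 k j) hv) (hinj i)) le_rfl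
    _ = (matA A).mulVec v j + 1 := by rw [(hasSum_mulVec_matA hA v j).tsum_eq]
    _ ≤ v j := hAv j

end PhaseMatrix

theorem minimal_solution_bounded_general {m : ℕ} {A : ℤ → Matrix (Fin m) (Fin m) ℝ}
    (B : ℤ → Matrix (Fin m) (Fin m) ℝ) (hA0 : ∀ k r s, 0 ≤ A k r s)
    (hA : ∀ r s, Summable fun k => A k r s)
    (hlt : ∀ r, ∃ k, ((matA A) ^ k).mulVec 1 r < 1) :
    (∀ (n i : ℕ), 1 ≤ i → ∀ j : Fin m,
        Xseq (P A B) n i j ≤ ((1 - matA A)⁻¹).mulVec 1 j) ∧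
      ∀ X : ℕ → Fin m → ℝ,
        (∀ (i : ℕ) (j : Fin m), Tendsto (fun n => Xseq (P A B) n i j) atTop (nhds (X i j))) →
        ∀ i : ℕ, 1 ≤ i → ∀ j : Fin m, X i j ≤ ((1 - matA A)⁻¹).mulVec 1 j := by
  have hM := matA_nonneg hA0
  have hunit := isUnit_one_sub_of_pow_mulVec_one_lt_one hM hlt
  have hsuper := isSupersolution_of_mulVec_matA_add_one_le (B := B) hA0 hA
    (inv_one_sub_mulVec_nonneg hM hlt zero_le_one) (mulVec_inv_one_sub_mulVec_add hunit 1).le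
  have hbound (n i : ℕ) (hi : 1 ≤ i) (j : Fin m) :
      Xseq (P A B) n i j ≤ ((1 - matA A)⁻¹).mulVec 1 j := by
    simpa [Nat.one_le_iff_ne_zero.1 hi] using
      hsuper.Xseq_le (fun _ _ _ _ => hA0 _ _ _) n i j
  exact ⟨hbound, fun X hX i hi j => le_of_tendsto' (hX i j) fun n => hbound n i hi j⟩

/-- For a `GI/G/1`-type Markov chain whose phase matrix `A` is irreducible
and not stochastic, the iterates `X_i^{(n)}` are bounded by `(I - A)⁻¹ e`, and hence so is the
minimal nonnegative solution `X_i = limₙ X_i^{(n)}`. -/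
theorem minimal_solution_bounded {m : ℕ} (hm : 0 < m)
    (A B : ℤ → Matrix (Fin m) (Fin m) ℝ)
    (hA0 : ∀ k r s, 0 ≤ A k r s) (hB0 : ∀ k r s, 0 ≤ B k r s)
    (hP : Stochastic (P A B))
    (hphaseirr : MatIrreducible (matA A))
    (hle : ∀ r, (matA A).mulVec 1 r ≤ 1)
    (hne : (matA A).mulVec 1 ≠ 1) :
    (∀ (n i : ℕ), 1 ≤ i → ∀ j : Fin m,
        Xseq (P A B) n i j ≤ ((1 - matA A)⁻¹).mulVec 1 j) ∧
      ∀ X : ℕ → Fin m → ℝ,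
        (∀ (i : ℕ) (j : Fin m), Tendsto (fun n => Xseq (P A B) n i j) atTop (nhds (X i j))) →
        ∀ i : ℕ, 1 ≤ i → ∀ j : Fin m, X i j ≤ ((1 - matA A)⁻¹).mulVec 1 j := by
  exact minimal_solution_bounded_general B hA0 (hP.summable_block hA0)
    (hphaseirr.exists_pow_mulVec_one_lt_one (matA_nonneg hA0) hle hne)

end GIG1
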